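/- For every NMAD-family 𝒜 on ℕ and every partition 𝒫 of ℕ into infinitely many infinite sets, it is not the case that F_𝒜 ≤_RK S_𝒫; that is, there is no surjection f : ℕ → ℕ with f[S_𝒫] = F_𝒜. -/

import Mathlib

open Set

/-- `f[G] = {A : f⁻¹(A) ∈ G}`, the image (Rudin–Keisler) filter of a family of sets. -/
def mapFilter {α β : Type*} (f : α → β) (G : Set (Set α)) : Set (Set β) := {A | f ⁻¹' A ∈ G}

/-- `F` is a (proper) filter of subsets. -/
def IsFilterFam {α : Type*} (F : Set (Set α)) : Prop :=
  Set.univ ∈ F ∧ (∀ A ∈ F, ∀ B : Set α, A ⊆ B → B ∈ F) ∧ (∀ A ∈ F, ∀ B ∈ F, A ∩ B ∈ F)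

/-- A free filter: a proper filter containing all cofinite sets. -/
def IsFreeFilter {α : Type*} (F : Set (Set α)) : Prop :=
  IsFilterFam F ∧ (∀ A : Set α, Aᶜ.Finite → A ∈ F) ∧ ∅ ∉ F

/-- `S → F` : `S` is an infinite set converging to the filter `F`, i.e. `S ⊆* A` for all `A ∈ F`. -/
def ConvTo {α : Type*} (S : Set α) (F : Set (Set α)) : Prop :=
  S.Infinite ∧ ∀ A ∈ F, (S \ A).Finite

/-- `F` is relatively equivalent to the Fréchet filter: some `A ∈ F` converges to `F`. -/
def RelFrechet {α : Type*} (F : Set (Set α)) : Prop := ∃ A ∈ F, ConvTo A F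

/-- Rudin–Keisler order: `F ≤_RK G` iff `f[G] = F` for some surjection `f`. -/
def RKle {α : Type*} (F G : Set (Set α)) : Prop :=
  ∃ f : α → α, Function.Surjective f ∧ mapFilter f G = F

/-- `F ≈ G` : there is a bijection `f` with `f[F] = G`. -/
def EquivFilter {α : Type*} (F G : Set (Set α)) : Prop :=
  ∃ f : α → α, Function.Bijective f ∧ mapFilter f F = G

/-- `F <_RK G` : `F ≤_RK G` and `¬ (F ≈ G)`. -/
def RKlt {α : Type*} (F G : Set (Set α)) : Prop := RKle F G ∧ ¬ EquivFilter F G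

/-- An AD-family: an infinite family of infinite sets with pairwise finite intersections. -/
def IsADFamily {α : Type*} (𝒜 : Set (Set α)) : Prop :=
  𝒜.Infinite ∧ (∀ A ∈ 𝒜, A.Infinite) ∧ ∀ A ∈ 𝒜, ∀ B ∈ 𝒜, A ≠ B → (A ∩ B).Finite

/-- The ideal generated by a family `𝒜`: sets almost covered by finitely many members of `𝒜`. -/
def idealGen {α : Type*} (𝒜 : Set (Set α)) : Set (Set α) :=
  {X | ∃ 𝒜' : Finset (Set α), ↑𝒜' ⊆ 𝒜 ∧ (X \ ⋃₀ ↑𝒜').Finite}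

/-- `S_𝒜`: the filter dual to the ideal generated by `𝒜`. -/
def SFam {α : Type*} (𝒜 : Set (Set α)) : Set (Set α) := {F | Fᶜ ∈ idealGen 𝒜}

/-- `F_𝒟 = {F : D ⊆* F for every D ∈ 𝒟}`. -/
def FFam {α : Type*} (𝒟 : Set (Set α)) : Set (Set α) := {F | ∀ D ∈ 𝒟, (D \ F).Finite}

/-- A nowhere MAD family: every set outside the generated ideal contains an infinite set
almost disjoint from every member of `𝒜`. -/
def IsNMAD {α : Type*} (𝒜 : Set (Set α)) : Prop :=
  IsADFamily 𝒜 ∧ ∀ X : Set α, X ∉ idealGen 𝒜 →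
    ∃ B ⊆ X, B.Infinite ∧ ∀ A ∈ 𝒜, (B ∩ A).Finite

/-- A partition of `ℕ` into infinitely many infinite sets. -/
def IsInfPartition (𝒬 : Set (Set ℕ)) : Prop :=
  𝒬.Infinite ∧ (∀ P ∈ 𝒬, P.Infinite) ∧ ⋃₀ 𝒬 = Set.univ ∧
    ∀ P ∈ 𝒬, ∀ Q ∈ 𝒬, P ≠ Q → P ∩ Q = ∅

/-- `F` is a Fréchet–Urysohn filter: every `F`-positive set contains a sequence converging to `F`. -/
def IsFUFilter {α : Type*} (F : Set (Set α)) : Prop :=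
  ∀ A : Set α, Aᶜ ∉ F → ∃ S ⊆ A, ConvTo S F

/-- The trace filter `F|_A = {G ∩ A : G ∈ F}`. -/
def traceFam {α : Type*} (F : Set (Set α)) (A : Set α) : Set (Set α) := {S | ∃ G ∈ F, S = G ∩ A}

/-- Todorčević–Uzcátegui order: there are `A ∈ G⁺`, `B ∈ F` and a bijection `f : A → B`
with `f[G|_A] = F|_B`. -/
def TUle {α : Type*} (F G : Set (Set α)) : Prop :=
  ∃ A : Set α, Aᶜ ∉ G ∧ ∃ B ∈ F, ∃ f : α → α, Set.BijOn f A B ∧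
    {Y : Set α | Y ⊆ B ∧ A ∩ f ⁻¹' Y ∈ traceFam G A} = traceFam F B

/-!
Mapping a filter forward preserves countable generation, and `S_𝒬` is countably generated because
`ℕ` and the partition `𝒬` are countable. On the other hand `F_𝒜` is not: given a decreasing base
`U 0 ⊇ U 1 ⊇ ⋯` and distinct `A 0, A 1, …` in `𝒜`, the diagonal union `X` of the sets `A k ∩ U k`
is almost contained in every `U n`, yet meets infinitely many members of `𝒜` in an infinite set, so
`X ∉ I(𝒜)`. An infinite `B ⊆ X` almost disjoint from all of `𝒜` then has complement in `F_𝒜`, so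
`U n` misses `B` for some `n`, although `B ⊆ X` is almost contained in `U n`.
-/

open Filter

variable {α β : Type*} {𝒜 𝒟 : Set (Set α)} {F X : Set α}

/-- The filter `F_𝒟` of the sets almost containing each member of `𝒟`, bundled as a `Filter`;
its sets are `FFam 𝒟`. -/
def ffamFilter (𝒟 : Set (Set α)) : Filter α := ⨆ D ∈ 𝒟, cofinite ⊓ 𝓟 D

/-- The filter `S_𝒟` dual to the ideal generated by `𝒟`, bundled as a `Filter`;
its sets are `SFam 𝒟`. -/
def sfamFilter (𝒟 : Set (Set α)) : Filter α := cofinite ⊓ ⨅ D : 𝒟, 𝓟 (D : Set α)ᶜ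

theorem mem_ffamFilter : F ∈ ffamFilter 𝒟 ↔ F ∈ FFam 𝒟 := by
  simp only [ffamFilter, mem_iSup, mem_inf_principal', mem_cofinite, compl_union, compl_compl]
  rfl

theorem mem_sfamFilter : F ∈ sfamFilter 𝒟 ↔ F ∈ SFam 𝒟 := by
  rw [sfamFilter, (hasBasis_cofinite.inf (hasBasis_iInf_principal_finite _)).mem_iff]
  constructor
  · rintro ⟨⟨s, t⟩, ⟨hs, ht⟩, hF⟩
    refine ⟨(ht.image Subtype.val).toFinset, by simp, hs.subset fun x hx => ?_⟩
    obtain ⟨hxF, hxt⟩ := hx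
    by_contra hxs
    refine hxF (hF ⟨hxs, mem_iInter₂.2 fun D hD hxD => hxt ⟨D, ?_, hxD⟩⟩)
    simpa using hD
  · rintro ⟨t, ht, hfin⟩
    refine ⟨⟨Fᶜ \ ⋃₀ t, (↑) ⁻¹' (t : Set (Set α))⟩,
      ⟨hfin, t.finite_toSet.preimage Subtype.val_injective.injOn⟩, ?_⟩
    rintro x ⟨hxs, hxt⟩
    by_contra hxF
    refine hxs ⟨hxF, ?_⟩
    rintro ⟨D, hD, hxD⟩
    exact mem_iInter₂.1 hxt ⟨D, ht hD⟩ hD hxD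

theorem isCountablyGenerated_cofinite [Countable α] :
    (cofinite : Filter α).IsCountablyGenerated :=
  HasCountableBasis.isCountablyGenerated ⟨hasBasis_cofinite, Countable.ofPred_finite⟩

theorem isCountablyGenerated_sfamFilter [Countable α] (h𝒟 : 𝒟.Countable) :
    (sfamFilter 𝒟).IsCountablyGenerated := by
  have := isCountablyGenerated_cofinite (α := α)
  have := h𝒟.to_subtype
  unfold sfamFilter
  infer_instance

theorem IsInfPartition.countable {𝒬 : Set (Set ℕ)} (h𝒬 : IsInfPartition 𝒬) : 𝒬.Countable := by
  obtain ⟨-, hinf, -, hdisj⟩ := h𝒬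
  have hpd : 𝒬.PairwiseDisjoint id := fun P hP Q hQ hPQ =>
    disjoint_iff_inter_eq_empty.2 (hdisj P hP Q hQ hPQ)
  exact hpd.countable_of_isOpen (fun P _ => isOpen_discrete P) fun P hP => (hinf P hP).nonempty

theorem finite_setOf_infinite_inter_of_mem_idealGen
    (hAD : 𝒜.Pairwise fun A B => (A ∩ B).Finite) (hX : X ∈ idealGen 𝒜) :
    {A ∈ 𝒜 | (A ∩ X).Infinite}.Finite := by
  obtain ⟨t, ht, hfin⟩ := hX
  refine t.finite_toSet.subset fun A ⟨hA, hAX⟩ => ?_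
  by_contra hAt
  have hAt_fin : (A ∩ ⋃₀ t).Finite := by
    rw [sUnion_eq_biUnion, inter_iUnion₂]
    exact t.finite_toSet.biUnion fun B hB => hAD hA (ht hB) fun h => hAt (h ▸ hB)
  refine hAX ((hAt_fin.union hfin).subset fun x ⟨hxA, hxX⟩ => ?_)
  by_cases hxt : x ∈ ⋃₀ (t : Set (Set α))
  · exact .inl ⟨hxA, hxt⟩
  · exact .inr ⟨hxX, hxt⟩

theorem IsADFamily.exists_pseudoIntersection_notMem_idealGen
    (h𝒜 : IsADFamily 𝒜) {U : ℕ → Set α} (hU : Antitone U) (hUF : ∀ n, U n ∈ FFam 𝒜) :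
    ∃ X ∉ idealGen 𝒜, ∀ n, (X \ U n).Finite := by
  obtain ⟨hinf, hAinf, hAD⟩ := h𝒜
  let A := hinf.natEmbedding
  refine ⟨⋃ k, A k ∩ U k, fun hX => ?_, fun n => ?_⟩
  · have hmeet (k : ℕ) : ((A k : Set α) ∩ ⋃ k, A k ∩ U k).Infinite := by
      have hAU : ((A k : Set α) ∩ U k).Infinite := by
        rw [← sdiff_sdiff_right_self]
        exact (hAinf _ (A k).2).sdiff (hUF k _ (A k).2)
      exact hAU.mono (subset_inter inter_subset_left (subset_iUnion_of_subset k subset_rfl))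
    have hAinj : Function.Injective fun k => (A k : Set α) :=
      Subtype.val_injective.comp A.injective
    have hAD' : 𝒜.Pairwise fun B C => (B ∩ C).Finite := fun B hB C hC => hAD B hB C hC
    exact infinite_range_of_injective hAinj <|
      (finite_setOf_infinite_inter_of_mem_idealGen hAD' hX).subset <|
        range_subset_iff.2 fun k => ⟨(A k).2, hmeet k⟩
  · refine ((finite_Iio n).biUnion fun k _ => hUF n _ (A k).2).subset ?_
    rintro x ⟨hx, hxU⟩
    obtain ⟨k, hxA, hxUk⟩ := mem_iUnion.1 hx
    have hkn : k < n := not_le.1 fun hnk => hxU (hU hnk hxUk)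
    exact mem_biUnion hkn ⟨hxA, hxU⟩

theorem IsNMAD.not_isCountablyGenerated_ffamFilter (h𝒜 : IsNMAD 𝒜) :
    ¬ (ffamFilter 𝒜).IsCountablyGenerated := by
  intro hcg
  obtain ⟨U, hU⟩ := (ffamFilter 𝒜).exists_antitone_basis
  obtain ⟨X, hX, hXU⟩ := h𝒜.1.exists_pseudoIntersection_notMem_idealGen hU.antitone
    fun n => mem_ffamFilter.1 (hU.mem n)
  obtain ⟨B, hBX, hBinf, hB⟩ := h𝒜.2 X hX
  have hBF : Bᶜ ∈ ffamFilter 𝒜 := mem_ffamFilter.2 fun A hA => by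
    rw [sdiff_compl, inter_comm]
    exact hB A hA
  obtain ⟨n, hn⟩ := hU.mem_iff.1 hBF
  exact hBinf ((hXU n).subset (subset_sdiff.2 ⟨hBX, subset_compl_iff_disjoint_left.1 hn⟩))

theorem statement17_general [Countable α] {𝒜 : Set (Set β)} (h𝒜 : IsNMAD 𝒜)
    {𝒬 : Set (Set α)} (h𝒬 : 𝒬.Countable) (f : α → β) :
    mapFilter f (SFam 𝒬) ≠ FFam 𝒜 := by
  intro h
  have hmap : (sfamFilter 𝒬).map f = ffamFilter 𝒜 := by
    ext F
    rw [mem_map, mem_sfamFilter, mem_ffamFilter, ← h]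
    rfl
  have := isCountablyGenerated_sfamFilter h𝒬
  exact h𝒜.not_isCountablyGenerated_ffamFilter (hmap ▸ inferInstance)

/-- For a NMAD family `𝒜` and a partition `𝒬` of `ℕ` into infinitely many infinite sets,
`F_𝒜` is not RK-below `S_𝒬`. -/
theorem statement17 (𝒜 : Set (Set ℕ)) (h𝒜 : IsNMAD 𝒜)
    (𝒬 : Set (Set ℕ)) (h𝒬 : IsInfPartition 𝒬) :
    ¬ RKle (FFam 𝒜) (SFam 𝒬) := by
  rintro ⟨f, -, hf⟩
  exact statement17_general h𝒜 h𝒬.countable f hf
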